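/- arXiv:2209.15130 — 5 statements merged into one kernel-verified Lean document; each statement's English description precedes it below -/
import Mathlib

section
/- Let 1 ≤ r ≤ p, Y ∈ ℝ^{p×r}_* and 0 < x ≤ σ_r(Y)/3. Let Y₁, Y₂ ∈ ℝ^{p×r}_* satisfy d(Y₁,Y) < x and d(Y₂,Y) < x, and let Q ∈ O(r) be any minimizer of O ↦ ‖Y₂O − Y₁‖_F over O ∈ O(r). Then for every t ∈ [0,1] the matrix Y₁ + t(Y₂Q − Y₁) has full column rank r and d(Y₁ + t(Y₂Q − Y₁), Y) < x. (Interpretation: the geodesic ball of radius x ≤ σ_r(Y)/3 centered at [Y] in the quotient manifold M is geodesically convex, since t ↦ [Y₁ + t(Y₂Q − Y₁)] is the minimizing geodesic joining [Y₁] and [Y₂].) -/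
open Matrix

/-- Trace inner product `⟨A,B⟩ = tr(AᵀB)`. -/
noncomputable def trInner {m n : ℕ} (A B : Matrix (Fin m) (Fin n) ℝ) : ℝ :=
  ∑ i, ∑ j, A i j * B i j

/-- Frobenius norm. -/
noncomputable def frob {m n : ℕ} (A : Matrix (Fin m) (Fin n) ℝ) : ℝ :=
  Real.sqrt (∑ i, ∑ j, (A i j) ^ 2)

open scoped Classical in
/-- The `i`-th largest eigenvalue (1-indexed, `1 ≤ i ≤ n`) of a Hermitian matrix; junk value 0
otherwise. -/
noncomputable def eigVal {n : ℕ} (A : Matrix (Fin n) (Fin n) ℝ) (i : ℕ) : ℝ :=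
  if hA : A.IsHermitian then
    if h : n - i < n then hA.eigenvalues (Tuple.sort hA.eigenvalues ⟨n - i, h⟩) else 0
  else 0

/-- The `i`-th largest singular value (1-indexed) of `Y`, so `sval Y 1 = ‖Y‖` (spectral norm)
and `sval Y r` is the least singular value. -/
noncomputable def sval {p r : ℕ} (Y : Matrix (Fin p) (Fin r) ℝ) (i : ℕ) : ℝ :=
  Real.sqrt (eigVal (Yᵀ * Y) i)

/-- `Q` is an orthogonal matrix. -/
def IsOrtho {r : ℕ} (Q : Matrix (Fin r) (Fin r) ℝ) : Prop := Qᵀ * Q = 1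

/-- The quotient distance `d(Y₁,Y₂) = min_{Q ∈ O(r)} ‖Y₂Q − Y₁‖_F`. -/
noncomputable def dOrth {p r : ℕ} (Y₁ Y₂ : Matrix (Fin p) (Fin r) ℝ) : ℝ :=
  sInf {c | ∃ Q : Matrix (Fin r) (Fin r) ℝ, IsOrtho Q ∧ c = frob (Y₂ * Q - Y₁)}


lemma frob_nonneg {m n : ℕ} (A : Matrix (Fin m) (Fin n) ℝ) : 0 ≤ frob A := Real.sqrt_nonneg _

lemma trace_ip {m n : ℕ} (A B : Matrix (Fin m) (Fin n) ℝ) :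
    (Aᵀ * B).trace = ∑ i, ∑ j, A i j * B i j := by
  simp only [Matrix.trace, Matrix.diag, Matrix.mul_apply, Matrix.transpose_apply]
  exact Finset.sum_comm

lemma frob_sq {m n : ℕ} (A : Matrix (Fin m) (Fin n) ℝ) : frob A ^ 2 = (Aᵀ * A).trace := by
  have h : 0 ≤ ∑ i, ∑ j, A i j ^ 2 :=
    Finset.sum_nonneg fun i _ => Finset.sum_nonneg fun j _ => sq_nonneg _
  rw [frob, Real.sq_sqrt h, trace_ip]
  simp only [sq]

section
open scoped Matrix.Norms.Frobenius
lemma frob_eq_norm {m n : ℕ} (A : Matrix (Fin m) (Fin n) ℝ) : frob A = ‖A‖ := by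
  rw [Matrix.frobenius_norm_def, frob, Real.sqrt_eq_rpow]
  congr 1
  refine Finset.sum_congr rfl fun i _ => Finset.sum_congr rfl fun j _ => ?_
  simp

lemma frob_add {m n : ℕ} (A B : Matrix (Fin m) (Fin n) ℝ) : frob (A + B) ≤ frob A + frob B := by
  simp only [frob_eq_norm]; exact norm_add_le _ _

lemma frob_sub {m n : ℕ} (A B : Matrix (Fin m) (Fin n) ℝ) : frob (A - B) ≤ frob A + frob B := by
  simp only [frob_eq_norm]; exact norm_sub_le _ _

lemma frob_smul {m n : ℕ} (c : ℝ) (A : Matrix (Fin m) (Fin n) ℝ) :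
    frob (c • A) = |c| * frob A := by
  simp only [frob_eq_norm, norm_smul, Real.norm_eq_abs]

lemma frob_mul {m n k : ℕ} (A : Matrix (Fin m) (Fin n) ℝ) (B : Matrix (Fin n) (Fin k) ℝ) :
    frob (A * B) ≤ frob A * frob B := by
  simp only [frob_eq_norm]; exact Matrix.frobenius_norm_mul _ _
end

lemma frob_transpose {m n : ℕ} (A : Matrix (Fin m) (Fin n) ℝ) : frob Aᵀ = frob A := by
  simp only [frob, Matrix.transpose_apply]; rw [Finset.sum_comm]

lemma ip_le {m n : ℕ} (A B : Matrix (Fin m) (Fin n) ℝ) :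
    |(Aᵀ * B).trace| ≤ frob A * frob B := by
  apply abs_le_of_sq_le_sq _ (mul_nonneg (frob_nonneg _) (frob_nonneg _))
  rw [mul_pow, frob_sq, frob_sq, trace_ip, trace_ip, trace_ip]
  have h := Finset.sum_mul_sq_le_sq_mul_sq (Finset.univ : Finset (Fin m × Fin n))
    (fun q => A q.1 q.2) (fun q => B q.1 q.2)
  simpa only [Fintype.sum_prod_type, ← sq] using h

lemma IsOrtho.mulT {r : ℕ} {Q : Matrix (Fin r) (Fin r) ℝ} (h : IsOrtho Q) : Q * Qᵀ = 1 :=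
  mul_eq_one_comm.mp h

lemma IsOrtho.tr {r : ℕ} {Q : Matrix (Fin r) (Fin r) ℝ} (h : IsOrtho Q) : IsOrtho Qᵀ := by
  rw [IsOrtho, Matrix.transpose_transpose]; exact h.mulT

lemma IsOrtho.mul {r : ℕ} {Q R : Matrix (Fin r) (Fin r) ℝ} (h : IsOrtho Q) (h' : IsOrtho R) :
    IsOrtho (Q * R) := by
  unfold IsOrtho at *
  rw [Matrix.transpose_mul, Matrix.mul_assoc, ← Matrix.mul_assoc Qᵀ, h, Matrix.one_mul, h']

lemma frob_mul_ortho {m r : ℕ} (A : Matrix (Fin m) (Fin r) ℝ) {Q : Matrix (Fin r) (Fin r) ℝ}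
    (h : IsOrtho Q) : frob (A * Q) = frob A := by
  rw [← sq_eq_sq₀ (frob_nonneg _) (frob_nonneg _), frob_sq, frob_sq, Matrix.transpose_mul,
    Matrix.mul_assoc, Matrix.trace_mul_comm, Matrix.mul_assoc, Matrix.mul_assoc, h.mulT,
    Matrix.mul_one]

/-- skew matrix row bound -/
lemma skew_vec {r : ℕ} (K : Matrix (Fin r) (Fin r) ℝ) (hK : Kᵀ = -K) (e : Fin r → ℝ) :
    2 * ∑ j, (∑ i, e i * K i j) ^ 2 ≤ (∑ i, e i ^ 2) * ∑ i, ∑ j, K i j ^ 2 := by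
  set v : Fin r → ℝ := fun j => ∑ i, e i * K i j with hv
  have hskew : ∀ i j, K j i = - K i j := fun i j => by
    have := congrFun (congrFun hK i) j
    simpa using this
  have h1 : ∑ i, ∑ j, K i j * (e i * v j) = ∑ j, v j ^ 2 := by
    rw [Finset.sum_comm]
    refine Finset.sum_congr rfl fun j _ => ?_
    rw [sq]; nth_rewrite 2 [hv]
    simp only
    rw [Finset.mul_sum]
    exact Finset.sum_congr rfl fun i _ => by ring
  have h2 : ∑ i, ∑ j, K i j * (v i * e j) = - ∑ j, v j ^ 2 := by
    rw [← h1, Finset.sum_comm, ← Finset.sum_neg_distrib]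
    refine Finset.sum_congr rfl fun i _ => ?_
    rw [← Finset.sum_neg_distrib]
    refine Finset.sum_congr rfl fun j _ => ?_
    rw [hskew]; ring
  have h3 : ∑ j, v j * e j = 0 := by
    have a : ∑ j, v j * e j = ∑ j, ∑ i, e i * K i j * e j := by
      simp only [hv, Finset.sum_mul]
    have b : ∑ j, ∑ i, e i * K i j * e j = - ∑ j, ∑ i, e i * K i j * e j := by
      nth_rewrite 1 [Finset.sum_comm]
      rw [← Finset.sum_neg_distrib]
      refine Finset.sum_congr rfl fun i _ => ?_
      rw [← Finset.sum_neg_distrib]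
      refine Finset.sum_congr rfl fun j _ => ?_
      rw [hskew]; ring
    linarith
  have prod : ∀ a b : Fin r → ℝ, ∑ i, ∑ j, a i * b j = (∑ i, a i) * ∑ j, b j := fun a b => by
    rw [Finset.sum_mul_sum]
  set N := ∑ i, e i ^ 2 with hN
  set V := ∑ j, v j ^ 2 with hV
  set k := ∑ i, ∑ j, K i j ^ 2 with hk
  have hN0 : 0 ≤ N := Finset.sum_nonneg fun _ _ => sq_nonneg _
  have key : 0 ≤ ∑ i, ∑ j, (N * K i j - (e i * v j - v i * e j)) ^ 2 :=
    Finset.sum_nonneg fun _ _ => Finset.sum_nonneg fun _ _ => sq_nonneg _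
  have p1 := prod (fun i => e i ^ 2) (fun j => v j ^ 2)
  have p2 := prod (fun i => v i ^ 2) (fun j => e j ^ 2)
  have p3 := prod (fun i => v i * e i) (fun j => v j * e j)
  rw [← hN, ← hV] at p1 p2
  rw [h3] at p3
  have ex : ∑ i, ∑ j, (N * K i j - (e i * v j - v i * e j)) ^ 2
      = N ^ 2 * k - 2 * N * V + 2 * N * (-V) + N * V + V * N - 2 * (0 * 0) := by
    calc _ = N ^ 2 * (∑ i, ∑ j, K i j ^ 2) - 2 * N * (∑ i, ∑ j, K i j * (e i * v j))
        + 2 * N * (∑ i, ∑ j, K i j * (v i * e j)) + (∑ i, ∑ j, e i ^ 2 * v j ^ 2)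
        + (∑ i, ∑ j, v i ^ 2 * e j ^ 2) - 2 * (∑ i, ∑ j, v i * e i * (v j * e j)) := by
          simp only [Finset.mul_sum, ← Finset.sum_add_distrib, ← Finset.sum_sub_distrib]
          refine Finset.sum_congr rfl fun i _ => Finset.sum_congr rfl fun j _ => ?_
          ring
      _ = _ := by rw [h1, h2, p1, p2, p3]
  rw [ex] at key
  rcases hN0.eq_or_lt with h0 | h0
  · have he : ∀ i, e i = 0 := fun i => by
      have := (Finset.sum_eq_zero_iff_of_nonneg (fun i _ => sq_nonneg (e i))).mp h0.symm i
        (Finset.mem_univ i)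
      exact pow_eq_zero_iff (two_ne_zero) |>.mp this
    have : V = 0 := by simp [hV, hv, he]
    rw [this, ← h0]; simp
  · have : 0 ≤ N * (N * k - 2 * V) := by nlinarith
    have := nonneg_of_mul_nonneg_right this h0
    linarith

lemma skew_mul {m r : ℕ} (E : Matrix (Fin m) (Fin r) ℝ) (K : Matrix (Fin r) (Fin r) ℝ)
    (hK : Kᵀ = -K) : 2 * frob (E * K) ^ 2 ≤ frob E ^ 2 * frob K ^ 2 := by
  simp only [frob_sq, trace_ip, Matrix.mul_apply, ← sq]
  rw [Finset.mul_sum, Finset.sum_mul]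
  exact Finset.sum_le_sum fun i _ => skew_vec K hK (fun j => E i j)

/-- The key local convexity estimate. -/
lemma key_ineq {p r : ℕ} (Y Z D : Matrix (Fin p) (Fin r) ℝ) (O : Matrix (Fin r) (Fin r) ℝ)
    (hO : IsOrtho O) (σ u : ℝ) (hσ0 : 0 ≤ σ)
    (hσ : ∀ X : Matrix (Fin r) (Fin r) ℝ, σ * frob X ≤ frob (Y * X))
    (hYZ : (Yᵀ * Z)ᵀ = Yᵀ * Z) (hZD : (Zᵀ * D)ᵀ = Zᵀ * D)
    (hw : frob (Y - Z - u • D) ≤ σ)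
    (hδ : frob (Y - Z) ^ 2 ≤ 2 * (σ * (σ - frob (Y - Z - u • D)))) :
    frob (Y - Z) ^ 2 - 2 * u * ((Y - Z)ᵀ * D).trace ≤ frob (Y * O - (Z + u • D)) ^ 2 := by
  set X : Matrix (Fin r) (Fin r) ℝ := 1 - O with hX
  set W := Y - Z - u • D with hW
  set E := Y - Z with hE
  set K := X - Xᵀ with hK
  have hKs : Kᵀ = -K := by simp [hK]
  have hXX : X * Xᵀ = X + Xᵀ := by
    rw [hX, Matrix.transpose_sub, Matrix.transpose_one, Matrix.sub_mul, Matrix.mul_sub,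
      Matrix.mul_sub, hO.mulT]
    simp; abel
  -- symmetric part
  have s1 : (X * Xᵀ * (Yᵀ * (Z + u • D))).trace
      = frob (Y * X) ^ 2 - ((Y * X)ᵀ * (W * X)).trace := by
    rw [frob_sq, ← Matrix.trace_sub, ← Matrix.mul_sub, ← Matrix.sub_mul]
    have : Y - W = Z + u • D := by rw [hW, hE]; abel
    rw [this, Matrix.transpose_mul, Matrix.mul_assoc, Matrix.trace_mul_comm]
    simp only [Matrix.mul_assoc]
  have s2 := (abs_le.mp (ip_le (Y * X) (W * X))).2
  have s3 := frob_mul W X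
  have s4 := hσ X
  have n1 := frob_nonneg X
  have n2 := frob_nonneg W
  have n3 := frob_nonneg (Y * X)
  have n4 := frob_nonneg D
  have n5 := frob_nonneg E
  have s5 : σ * (σ - frob W) * frob X ^ 2 ≤ (X * Xᵀ * (Yᵀ * (Z + u • D))).trace := by
    rw [s1]
    have a1 : frob (Y * X) * frob (W * X) ≤ frob (Y * X) * (frob W * frob X) :=
      mul_le_mul_of_nonneg_left s3 n3
    have a2 : frob W * frob X ≤ σ * frob X := mul_le_mul_of_nonneg_right hw n1
    have a3 : σ * frob X * (σ * frob X - frob W * frob X)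
        ≤ frob (Y * X) * (frob (Y * X) - frob W * frob X) := by
      apply mul_le_mul s4 (by linarith) (by linarith) n3
    nlinarith
  -- skew part
  have sk0 : ∀ S : Matrix (Fin r) (Fin r) ℝ, Sᵀ = S → (Kᵀ * S).trace = 0 := fun S hS => by
    have h := Matrix.trace_transpose (Kᵀ * S)
    rw [Matrix.transpose_mul, hS, Matrix.transpose_transpose, Matrix.trace_mul_comm] at h
    rw [hKs, Matrix.neg_mul, Matrix.trace_neg] at h ⊢
    linarith
  have k1 : (Kᵀ * (Yᵀ * (Z + u • D))).trace = u * ((E * K)ᵀ * D).trace := by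
    have e : Yᵀ * (Z + u • D) = Yᵀ * Z + u • (Zᵀ * D) + u • (Eᵀ * D) := by
      rw [hE, Matrix.mul_add, Matrix.mul_smul, Matrix.transpose_sub, Matrix.sub_mul, smul_sub]
      abel
    rw [e, Matrix.mul_add, Matrix.mul_add, Matrix.trace_add, Matrix.trace_add, sk0 _ hYZ,
      Matrix.mul_smul, Matrix.trace_smul, sk0 _ hZD, Matrix.mul_smul, Matrix.trace_smul,
      Matrix.transpose_mul, Matrix.mul_assoc]
    simp
  have k2 := ip_le (E * K) D
  have k3 := skew_mul E K hKs
  have k4 : frob K ≤ 2 * frob X := by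
    have := frob_sub X Xᵀ
    rw [frob_transpose] at this
    linarith
  have k5 : frob (E * K) ^ 2 ≤ 2 * (frob E ^ 2 * frob X ^ 2) := by
    have : frob K ^ 2 ≤ (2 * frob X) ^ 2 := pow_le_pow_left₀ (frob_nonneg _) k4 2
    have := mul_le_mul_of_nonneg_left this (sq_nonneg (frob E))
    nlinarith
  -- expand
  have ex : frob (Y * O - (Z + u • D)) ^ 2 = frob E ^ 2 - 2 * u * (Eᵀ * D).trace
      + u ^ 2 * frob D ^ 2 + 2 * (Xᵀ * (Yᵀ * (Z + u • D))).trace := by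
    have hOX : Y * O - (Z + u • D) = W - Y * X := by
      rw [hW, hX, hE, Matrix.mul_sub, Matrix.mul_one]; abel
    have c : ∀ A B : Matrix (Fin p) (Fin r) ℝ,
        frob (A - B) ^ 2 = frob A ^ 2 - 2 * (Bᵀ * A).trace + frob B ^ 2 := fun A B => by
      have h : (Aᵀ * B).trace = (Bᵀ * A).trace := by
        rw [← Matrix.trace_transpose (Aᵀ * B), Matrix.transpose_mul, Matrix.transpose_transpose]
      simp only [frob_sq, Matrix.transpose_sub, Matrix.sub_mul, Matrix.mul_sub, Matrix.trace_sub, h]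
      ring
    have c1 : frob (Y * O) ^ 2 = frob Y ^ 2 := by rw [frob_mul_ortho _ hO]
    have c2 := c (Y * O) (Z + u • D)
    have c3 := c Y (Z + u • D)
    have c4 := c E (u • D)
    have c5 : Y - (Z + u • D) = E - u • D := by rw [hE]; abel
    have c6 : (Xᵀ * (Yᵀ * (Z + u • D))).trace
        = ((Z + u • D)ᵀ * Y).trace - ((Z + u • D)ᵀ * (Y * O)).trace := by
      rw [← Matrix.trace_sub, ← Matrix.mul_sub, ← Matrix.trace_transpose]
      simp only [Matrix.transpose_mul, Matrix.transpose_transpose]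
      rw [hX, Matrix.mul_assoc, Matrix.mul_sub, Matrix.mul_one]
    have c7 : frob (u • D) ^ 2 = u ^ 2 * frob D ^ 2 := by rw [frob_smul, mul_pow, sq_abs]
    have c8 : ((u • D)ᵀ * E).trace = u * (Eᵀ * D).trace := by
      rw [← Matrix.trace_transpose]
      simp [Matrix.transpose_mul]
    rw [c5, c4, c7, c8] at c3
    rw [c2, c6, c1]
    linarith
  have dbl : 2 * (Xᵀ * (Yᵀ * (Z + u • D))).trace
      = (X * Xᵀ * (Yᵀ * (Z + u • D))).trace + (Kᵀ * (Yᵀ * (Z + u • D))).trace := by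
    have hKt : Kᵀ = Xᵀ - X := by rw [hKs, hK, neg_sub]
    rw [hXX, hKt, Matrix.add_mul, Matrix.sub_mul Xᵀ X,
      Matrix.trace_add, Matrix.trace_sub]
    ring
  rw [ex, dbl, k1]
  have f1 : |u * ((E * K)ᵀ * D).trace| ≤ |u| * frob D * frob (E * K) := by
    rw [abs_mul]
    have := mul_le_mul_of_nonneg_left k2 (abs_nonneg u)
    linarith
  have f2 := (abs_le.mp f1).1
  have f3 : frob (E * K) ^ 2 ≤ 4 * (σ * (σ - frob W) * frob X ^ 2) := by
    have := mul_le_mul_of_nonneg_right hδ (sq_nonneg (frob X))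
    linarith
  have f4 : (|u| * frob D) ^ 2 = u ^ 2 * frob D ^ 2 := by rw [mul_pow, sq_abs]
  nlinarith [sq_nonneg (|u| * frob D - frob (E * K) / 2)]

lemma givens {r : ℕ} (K : Matrix (Fin r) (Fin r) ℝ) (hK : Kᵀ = -K) (hK3 : K * K * K = -K)
    (c s : ℝ) (h : c ^ 2 + s ^ 2 = 1) : IsOrtho (1 + s • K + (1 - c) • (K * K)) := by
  have hT : (1 + s • K + (1 - c) • (K * K))ᵀ = 1 - s • K + (1 - c) • (K * K) := by
    simp only [Matrix.transpose_add, Matrix.transpose_smul, Matrix.transpose_mul, hK,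
      Matrix.transpose_one, neg_mul_neg, smul_neg]
    abel
  have h3 : K * (K * K) = -K := by rw [← Matrix.mul_assoc, hK3]
  rw [IsOrtho, hT]
  simp only [Matrix.add_mul, Matrix.sub_mul, Matrix.mul_add, Matrix.one_mul, Matrix.mul_one,
    Matrix.smul_mul, Matrix.mul_smul, Matrix.mul_assoc, h3, Matrix.mul_neg]
  have : s ^ 2 = 1 - c ^ 2 := by linarith
  have e : s * s = 1 - c ^ 2 := by nlinarith
  ext i j
  simp only [Matrix.add_apply, Matrix.sub_apply, Matrix.smul_apply, Matrix.neg_apply, smul_eq_mul]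
  linear_combination (-(K * K) i j) * e

lemma foc {p r : ℕ} (A B : Matrix (Fin p) (Fin r) ℝ)
    (h : ∀ O : Matrix (Fin r) (Fin r) ℝ, IsOrtho O → frob (B - A) ≤ frob (B * O - A)) :
    (Bᵀ * A)ᵀ = Bᵀ * A := by
  set M := Bᵀ * A with hM
  have h1 : ∀ O : Matrix (Fin r) (Fin r) ℝ, IsOrtho O → (Oᵀ * M).trace ≤ M.trace := by
    intro O hO
    have c : ∀ A B : Matrix (Fin p) (Fin r) ℝ,
        frob (A - B) ^ 2 = frob A ^ 2 - 2 * (Aᵀ * B).trace + frob B ^ 2 := fun A B => by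
      have h : (Aᵀ * B).trace = (Bᵀ * A).trace := by
        rw [← Matrix.trace_transpose (Aᵀ * B), Matrix.transpose_mul, Matrix.transpose_transpose]
      simp only [frob_sq, Matrix.transpose_sub, Matrix.sub_mul, Matrix.mul_sub, Matrix.trace_sub, h]
      ring
    have a := pow_le_pow_left₀ (frob_nonneg _) (h O hO) 2
    rw [c, c, frob_mul_ortho _ hO, Matrix.transpose_mul, Matrix.mul_assoc] at a
    linarith
  have h2 : ∀ K : Matrix (Fin r) (Fin r) ℝ, Kᵀ = -K → K * K * K = -K → (K * M).trace = 0 := by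
    intro K hK hK3
    set a := - (K * K * M).trace with ha
    set b := - (K * M).trace with hb
    have h3 : ∀ c s : ℝ, c ^ 2 + s ^ 2 = 1 → s * b + c * a ≤ a := by
      intro c s hcs
      have := h1 _ (givens K hK hK3 c s hcs)
      simp only [Matrix.transpose_add, Matrix.transpose_smul, Matrix.transpose_mul, hK,
        Matrix.transpose_one, neg_mul_neg, smul_neg, Matrix.add_mul, Matrix.one_mul,
        Matrix.neg_mul, Matrix.smul_mul, Matrix.trace_add, Matrix.trace_neg, Matrix.trace_smul,
        smul_eq_mul] at this
      rw [ha, hb]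
      linarith
    have hb0 : b = 0 := by
      by_contra hne
      have hpos : 0 < a ^ 2 + b ^ 2 := by positivity
      set ρ := Real.sqrt (a ^ 2 + b ^ 2) with hρ
      have hρ2 : ρ ^ 2 = a ^ 2 + b ^ 2 := Real.sq_sqrt hpos.le
      have hρ0 : 0 < ρ := Real.sqrt_pos.mpr hpos
      have := h3 (a / ρ) (b / ρ) (by field_simp; linarith)
      have e : b / ρ * b + a / ρ * a = ρ := by field_simp; linarith
      rw [e] at this
      have : ρ ^ 2 ≤ a ^ 2 := pow_le_pow_left₀ hρ0.le this 2
      have : 0 < b ^ 2 := by positivity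
      linarith
    linarith
  ext i j
  rw [Matrix.transpose_apply]
  by_cases hij : i = j
  · rw [hij]
  have := h2 (Matrix.single i j 1 - Matrix.single j i 1) (by simp) (by
    simp [Matrix.sub_mul, Matrix.mul_sub, hij, Ne.symm hij]; abel)
  rw [Matrix.sub_mul, Matrix.trace_sub, Matrix.trace_single_mul, Matrix.trace_single_mul] at this
  simp at this
  linarith

lemma sval_bound {p r : ℕ} (hr : 1 ≤ r) (Y : Matrix (Fin p) (Fin r) ℝ)
    (X : Matrix (Fin r) (Fin r) ℝ) : sval Y r * frob X ≤ frob (Y * X) := by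
  have hA : (Yᵀ * Y).IsHermitian := by
    have := Matrix.isHermitian_conjTranspose_mul_self Y
    simpa using this
  have hlt : r - r < r := by omega
  set l := eigVal (Yᵀ * Y) r with hl
  have hmin : ∀ i, l ≤ hA.eigenvalues i := by
    intro i
    rw [hl, eigVal, dif_pos hA, dif_pos hlt]
    have := Tuple.monotone_sort hA.eigenvalues
      (show (⟨r - r, hlt⟩ : Fin r) ≤ (Tuple.sort hA.eigenvalues).symm i by
        rw [Fin.le_def]; simp)
    simpa using this
  have hnn : 0 ≤ l := by
    rw [hl, eigVal, dif_pos hA, dif_pos hlt]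
    have h : (Yᵀ * Y).PosSemidef := by
      have := Matrix.posSemidef_conjTranspose_mul_self Y
      simpa using this
    exact h.eigenvalues_nonneg _
  have hspec := hA.spectral_theorem
  rw [Unitary.conjStarAlgAut_apply] at hspec
  set U : Matrix (Fin r) (Fin r) ℝ := (hA.eigenvectorUnitary : Matrix (Fin r) (Fin r) ℝ) with hU
  have hst : star U = Uᵀ := by
    rw [Matrix.star_eq_conjTranspose]; ext i j; simp
  have hUo : IsOrtho Uᵀ := by
    rw [IsOrtho, Matrix.transpose_transpose, ← hst]
    exact Unitary.coe_mul_star_self _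
  set W := Uᵀ * X with hW
  have e1 : frob (Y * X) ^ 2 = ∑ i, ∑ j, hA.eigenvalues i * (W i j) ^ 2 := by
    have : (Y * X)ᵀ * (Y * X) = Wᵀ * (Matrix.diagonal hA.eigenvalues * W) := by
      have h1 : (Y * X)ᵀ * (Y * X) = Xᵀ * (Yᵀ * Y) * X := by
        simp only [Matrix.transpose_mul, Matrix.mul_assoc]
      have h2 := congrArg (fun N => Xᵀ * N * X) hspec
      rw [h1, h2, hst, hW]
      simp only [Matrix.transpose_mul, Matrix.mul_assoc, Matrix.transpose_transpose]
      rfl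
    rw [frob_sq, this, trace_ip]
    refine Finset.sum_congr rfl fun i _ => Finset.sum_congr rfl fun j _ => ?_
    rw [Matrix.diagonal_mul]; ring
  have e2 : frob X ^ 2 = ∑ i, ∑ j, (W i j) ^ 2 := by
    have : Wᵀ * W = Xᵀ * X := by
      rw [hW, Matrix.transpose_mul, Matrix.mul_assoc, ← Matrix.mul_assoc Uᵀᵀ, hUo, Matrix.one_mul]
    rw [frob_sq, ← this, trace_ip]
    simp only [sq]
  refine le_of_sq_le_sq ?_ (frob_nonneg _)
  rw [mul_pow, sval, ← hl, Real.sq_sqrt hnn, e1, e2, Finset.mul_sum]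
  refine Finset.sum_le_sum fun i _ => ?_
  rw [Finset.mul_sum]
  exact Finset.sum_le_sum fun j _ => mul_le_mul_of_nonneg_right (hmin i) (sq_nonneg _)

lemma full_rank {p r : ℕ} (Y Z : Matrix (Fin p) (Fin r) ℝ) (σ : ℝ)
    (hσ : ∀ X : Matrix (Fin r) (Fin r) ℝ, σ * frob X ≤ frob (Y * X))
    (h : frob (Y - Z) < σ) : Z.rank = r := by
  have inj : Function.Injective Z.mulVecLin := by
    rw [injective_iff_map_eq_zero]
    intro v hv
    by_contra hne
    obtain ⟨k, hk⟩ := Function.ne_iff.mp hne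
    set X : Matrix (Fin r) (Fin r) ℝ := Matrix.of fun i _ => v i with hX
    have hZX : Z * X = 0 := by
      ext i j
      have := congrFun hv i
      simpa [hX, Matrix.mul_apply, Matrix.mulVec, dotProduct] using this
    have h1 : frob (Y * X) ≤ frob (Y - Z) * frob X := by
      have := frob_mul (Y - Z) X
      rwa [Matrix.sub_mul, hZX, sub_zero] at this
    have h2 := hσ X
    have h3 : 0 < frob X := by
      rw [frob]
      apply Real.sqrt_pos.mpr
      have hk0 : 0 < X k k ^ 2 := by
        have : X k k = v k := rfl
        rw [this]; exact sq_pos_of_ne_zero hk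
      calc 0 < X k k ^ 2 := hk0
        _ ≤ ∑ j, X k j ^ 2 := Finset.single_le_sum (f := fun j => X k j ^ 2)
          (fun j _ => sq_nonneg _) (Finset.mem_univ k)
        _ ≤ _ := Finset.single_le_sum (f := fun i => ∑ j, X i j ^ 2)
          (fun i _ => Finset.sum_nonneg fun j _ => sq_nonneg _) (Finset.mem_univ k)
    nlinarith
  rw [Matrix.rank, LinearMap.finrank_range_of_inj inj]
  simp

lemma dOrth_le {p r : ℕ} (Z Y : Matrix (Fin p) (Fin r) ℝ) {O : Matrix (Fin r) (Fin r) ℝ}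
    (hO : IsOrtho O) : dOrth Z Y ≤ frob (Y * O - Z) :=
  csInf_le ⟨0, by rintro c ⟨Q, _, rfl⟩; exact frob_nonneg _⟩ ⟨O, hO, rfl⟩

lemma isOrtho_one {r : ℕ} : IsOrtho (1 : Matrix (Fin r) (Fin r) ℝ) := by simp [IsOrtho]

lemma ortho_compact (r : ℕ) : IsCompact {O : Matrix (Fin r) (Fin r) ℝ | IsOrtho O} := by
  have hbig : IsCompact (Set.univ.pi fun _ : Fin r => Set.univ.pi fun _ : Fin r =>
      Set.Icc (-1 : ℝ) 1) :=
    isCompact_univ_pi fun _ => isCompact_univ_pi fun _ => isCompact_Icc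
  refine IsCompact.of_isClosed_subset (X := Matrix (Fin r) (Fin r) ℝ) hbig ?_ ?_
  · have hc : Continuous fun O : Matrix (Fin r) (Fin r) ℝ => Oᵀ * O :=
      (continuous_id.matrix_transpose).matrix_mul continuous_id
    exact isClosed_eq hc continuous_const
  · intro O hO i _ j _
    have h := congrFun (congrFun (show Oᵀ * O = 1 from hO) j) j
    rw [Matrix.mul_apply, Matrix.one_apply_eq] at h
    have h1 : Oᵀ j i * O i j ≤ 1 := by
      rw [← h]
      exact Finset.single_le_sum (f := fun k => Oᵀ j k * O k j)
        (fun k _ => by rw [Matrix.transpose_apply]; exact mul_self_nonneg _) (Finset.mem_univ i)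
    rw [Matrix.transpose_apply] at h1
    have : |O i j| ≤ 1 := by
      rw [← sq_le_one_iff_abs_le_one]; linarith [sq (O i j)]
    exact abs_le.mp this

lemma frob_continuous {m n : ℕ} : Continuous fun A : Matrix (Fin m) (Fin n) ℝ => frob A := by
  unfold frob
  refine Real.continuous_sqrt.comp (continuous_finsetSum _ fun i _ =>
    continuous_finsetSum _ fun j _ => ?_)
  exact (continuous_id.matrix_elem i j).pow 2

lemma dOrth_min {p r : ℕ} (Z Y : Matrix (Fin p) (Fin r) ℝ) :
    ∃ O : Matrix (Fin r) (Fin r) ℝ, IsOrtho O ∧ dOrth Z Y = frob (Y * O - Z) := by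
  obtain ⟨O, hO, hmin⟩ := (ortho_compact r).exists_isMinOn ⟨1, isOrtho_one⟩
    (f := fun O => frob (Y * O - Z))
    (frob_continuous.comp
      ((continuous_const.matrix_mul continuous_id).sub continuous_const)).continuousOn
  refine ⟨O, hO, le_antisymm (dOrth_le Z Y hO) ?_⟩
  refine le_csInf ⟨_, O, hO, rfl⟩ ?_
  rintro c ⟨Q, hQ, rfl⟩
  exact hmin hQ

lemma dOrth_lip {p r : ℕ} (Z Z' Y : Matrix (Fin p) (Fin r) ℝ) :
    dOrth Z' Y ≤ dOrth Z Y + frob (Z - Z') := by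
  obtain ⟨O, hO, h⟩ := dOrth_min Z Y
  rw [h]
  refine (dOrth_le Z' Y hO).trans ?_
  have : Y * O - Z' = (Y * O - Z) + (Z - Z') := by abel
  rw [this]; exact frob_add _ _

lemma dOrth_nonneg {p r : ℕ} (Z Y : Matrix (Fin p) (Fin r) ℝ) : 0 ≤ dOrth Z Y := by
  obtain ⟨O, hO, h⟩ := dOrth_min Z Y
  rw [h]; exact frob_nonneg _

/-- A continuous function on `[0,1]` with local support lines is below its endpoint bound. -/
lemma support_max (g : ℝ → ℝ) (hg : Continuous g) (c : ℝ) (h0 : g 0 < c) (h1 : g 1 < c)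
    (hs : ∀ t ∈ Set.Icc (0 : ℝ) 1, ∃ m ε : ℝ, 0 < ε ∧ ∀ s, |s - t| < ε →
      g t + m * (s - t) ≤ g s) : ∀ t ∈ Set.Icc (0 : ℝ) 1, g t < c := by
  obtain ⟨t1, ht1, hmax⟩ := (isCompact_Icc (a := (0 : ℝ)) (b := 1)).exists_isMaxOn
    ⟨0, by simp⟩ hg.continuousOn
  have hS : IsCompact (Set.Icc (0 : ℝ) 1 ∩ {t | g t1 ≤ g t}) :=
    isCompact_Icc.inter_right (isClosed_le continuous_const hg)
  obtain ⟨t0, ⟨ht0, hge⟩, hleast⟩ := hS.exists_isLeast ⟨t1, ht1, le_refl (g t1)⟩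
  have hge' : g t1 ≤ g t0 := hge
  suffices g t0 < c from fun t ht => lt_of_le_of_lt (hmax ht) (lt_of_le_of_lt hge' this)
  rcases ht0.1.eq_or_lt with e | p0
  · rw [← e]; exact h0
  rcases ht0.2.eq_or_lt with e | p1
  · rw [e]; exact h1
  exfalso
  obtain ⟨m, ε, hε, hm⟩ := hs t0 ht0
  rcases le_or_gt m 0 with hm0 | hm0
  · have a0 : 0 < min (ε / 2) t0 := lt_min (by linarith) p0
    have a1 := min_le_left (ε / 2) t0
    have a2 := min_le_right (ε / 2) t0
    have := hm (t0 - min (ε / 2) t0) (by rw [abs_lt]; constructor <;> linarith)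
    have hmem : t0 - min (ε / 2) t0 ∈ Set.Icc (0 : ℝ) 1 ∩ {t | g t1 ≤ g t} := by
      refine ⟨⟨by linarith, by linarith⟩, ?_⟩
      show g t1 ≤ _
      nlinarith
    have := hleast hmem
    linarith
  · have a0 : 0 < min (ε / 2) (1 - t0) := lt_min (by linarith) (by linarith)
    have a1 := min_le_left (ε / 2) (1 - t0)
    have a2 := min_le_right (ε / 2) (1 - t0)
    have := hm (t0 + min (ε / 2) (1 - t0)) (by rw [abs_lt]; constructor <;> linarith)
    have h2 : g (t0 + min (ε / 2) (1 - t0)) ≤ g t1 :=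
      hmax (show _ ∈ Set.Icc (0 : ℝ) 1 from ⟨by linarith, by linarith⟩)
    nlinarith

/-- geodesic convexity of balls of radius at most `σ_r(Y)/3` in the quotient
manifold: the minimizing geodesic joining two points of the ball stays in the ball and
consists of full-rank matrices. -/
theorem stmt0 {p r : ℕ} (hr : 1 ≤ r) (hrp : r ≤ p)
    (Y Y₁ Y₂ : Matrix (Fin p) (Fin r) ℝ)
    (hY : Y.rank = r) (hY₁ : Y₁.rank = r) (hY₂ : Y₂.rank = r)
    (x : ℝ) (hx : 0 < x) (hxr : x ≤ sval Y r / 3)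
    (hd₁ : dOrth Y₁ Y < x) (hd₂ : dOrth Y₂ Y < x)
    (Q : Matrix (Fin r) (Fin r) ℝ) (hQ : IsOrtho Q)
    (hQmin : ∀ O : Matrix (Fin r) (Fin r) ℝ, IsOrtho O →
      frob (Y₂ * Q - Y₁) ≤ frob (Y₂ * O - Y₁)) :
    ∀ t : ℝ, t ∈ Set.Icc (0 : ℝ) 1 →
      (Y₁ + t • (Y₂ * Q - Y₁)).rank = r ∧ dOrth (Y₁ + t • (Y₂ * Q - Y₁)) Y < x := by
  set D := Y₂ * Q - Y₁ with hD
  set σ := sval Y r with hσd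
  have hσpos : 0 < σ := by linarith
  have hσ : ∀ X : Matrix (Fin r) (Fin r) ℝ, σ * frob X ≤ frob (Y * X) := sval_bound hr Y
  have hσO : ∀ O : Matrix (Fin r) (Fin r) ℝ, IsOrtho O →
      ∀ X : Matrix (Fin r) (Fin r) ℝ, σ * frob X ≤ frob (Y * O * X) := by
    intro O hO X
    have h1 := hσ (O * X)
    have h2 : frob (O * X) = frob X := by
      rw [← frob_transpose, Matrix.transpose_mul, frob_mul_ortho _ hO.tr, frob_transpose]
    rwa [h2, ← Matrix.mul_assoc] at h1
  obtain ⟨O₁, hO₁, e₁⟩ := dOrth_min Y₁ Y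
  obtain ⟨O₂, hO₂, e₂⟩ := dOrth_min Y₂ Y
  have hDlt : frob D < 2 * x := by
    have a1 := hQmin (O₂ᵀ * O₁) (hO₂.tr.mul hO₁)
    have a2 : Y₂ * (O₂ᵀ * O₁) - Y₁ = (Y * O₁ - Y₁) - (Y * O₂ - Y₂) * (O₂ᵀ * O₁) := by
      have : Y * O₂ * (O₂ᵀ * O₁) = Y * O₁ := by
        rw [Matrix.mul_assoc, ← Matrix.mul_assoc O₂, hO₂.mulT, Matrix.one_mul]
      rw [Matrix.sub_mul, this]; abel
    have a3 := frob_sub (Y * O₁ - Y₁) ((Y * O₂ - Y₂) * (O₂ᵀ * O₁))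
    rw [frob_mul_ortho _ (hO₂.tr.mul hO₁), ← a2] at a3
    linarith
  have hD0 := frob_nonneg D
  have hYD : (Y₁ᵀ * D)ᵀ = Y₁ᵀ * D := by
    have h := foc Y₁ (Y₂ * Q) (fun O hO => by
      have := hQmin (Q * O) (hQ.mul hO)
      rwa [← Matrix.mul_assoc] at this)
    have h' : (Y₁ᵀ * (Y₂ * Q))ᵀ = Y₁ᵀ * (Y₂ * Q) := by
      have h2 := congrArg Matrix.transpose h
      simp only [Matrix.transpose_mul, Matrix.transpose_transpose] at h h2 ⊢
      rw [h2]
    rw [hD, Matrix.mul_sub, Matrix.transpose_sub, h', Matrix.transpose_mul Y₁ᵀ Y₁,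
      Matrix.transpose_transpose]
  have hZD : ∀ t : ℝ, ((Y₁ + t • D)ᵀ * D)ᵀ = (Y₁ + t • D)ᵀ * D := by
    intro t
    rw [Matrix.transpose_add, Matrix.add_mul, Matrix.transpose_add, hYD, Matrix.transpose_smul,
      Matrix.smul_mul, Matrix.transpose_smul, Matrix.transpose_mul Dᵀ D, Matrix.transpose_transpose]
  have hlip : ∀ s t : ℝ, dOrth (Y₁ + s • D) Y ≤ dOrth (Y₁ + t • D) Y + frob D * |s - t| := by
    intro s t
    have h := dOrth_lip (Y₁ + t • D) (Y₁ + s • D) Y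
    have e : Y₁ + t • D - (Y₁ + s • D) = (t - s) • D := by rw [sub_smul]; abel
    rw [e, frob_smul, abs_sub_comm] at h
    linarith
  have hcont : Continuous fun t : ℝ => dOrth (Y₁ + t • D) Y := by
    have : LipschitzWith (Real.toNNReal (frob D)) fun t : ℝ => dOrth (Y₁ + t • D) Y := by
      apply LipschitzWith.of_le_add_mul
      intro s t
      rw [Real.coe_toNNReal _ hD0, Real.dist_eq]
      exact hlip s t
    exact this.continuous
  have h0 : dOrth (Y₁ + (0 : ℝ) • D) Y < x := by simpa using hd₁
  have h1 : dOrth (Y₁ + (1 : ℝ) • D) Y < x := by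
    have e : Y₁ + (1 : ℝ) • D = Y₂ * Q := by rw [one_smul, hD]; abel
    rw [e]
    refine lt_of_le_of_lt (dOrth_le _ _ (hO₂.mul hQ)) ?_
    rw [← Matrix.mul_assoc, ← Matrix.sub_mul, frob_mul_ortho _ hQ, ← e₂]
    exact hd₂
  have h2x : ∀ t ∈ Set.Icc (0 : ℝ) 1, dOrth (Y₁ + t • D) Y < 2 * x := by
    intro t ht
    rcases le_total t (1 / 2) with h | h
    · have := hlip t 0
      rw [sub_zero, abs_of_nonneg ht.1] at this
      nlinarith [ht.1]
    · have := hlip t 1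
      rw [abs_of_nonpos (by linarith [ht.2])] at this
      nlinarith [ht.2]
  have hlt : ∀ t ∈ Set.Icc (0 : ℝ) 1, dOrth (Y₁ + t • D) Y ^ 2 < x ^ 2 := by
    apply support_max (fun t => dOrth (Y₁ + t • D) Y ^ 2) (hcont.pow 2) (x ^ 2)
      (pow_lt_pow_left₀ h0 (dOrth_nonneg _ _) two_ne_zero)
      (pow_lt_pow_left₀ h1 (dOrth_nonneg _ _) two_ne_zero)
    intro t ht
    obtain ⟨O, hO, eO⟩ := dOrth_min (Y₁ + t • D) Y
    have hlt2 := h2x t ht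
    rw [eO] at hlt2
    refine ⟨-2 * ((Y * O - (Y₁ + t • D))ᵀ * D).trace, σ / 9 / (frob D + 1), by positivity, ?_⟩
    intro s hs
    obtain ⟨R, hR, eR⟩ := dOrth_min (Y₁ + s • D) Y
    have hsm : |s - t| * frob D ≤ σ / 9 := by
      rw [lt_div_iff₀ (by positivity)] at hs
      nlinarith [abs_nonneg (s - t)]
    have hsym : ((Y * O)ᵀ * (Y₁ + t • D))ᵀ = (Y * O)ᵀ * (Y₁ + t • D) := by
      apply foc
      intro V hV
      rw [← eO, Matrix.mul_assoc]
      exact dOrth_le _ _ (hO.mul hV)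
    have hw : frob (Y * O - (Y₁ + t • D) - (s - t) • D) ≤ 7 * σ / 9 := by
      have := frob_sub (Y * O - (Y₁ + t • D)) ((s - t) • D)
      rw [frob_smul] at this
      linarith
    have key := key_ineq (Y * O) (Y₁ + t • D) D (Oᵀ * R) (hO.tr.mul hR) σ (s - t) hσpos.le
      (hσO O hO) hsym (hZD t) (by linarith) (by
        have n := frob_nonneg (Y * O - (Y₁ + t • D))
        have b1 : frob (Y * O - (Y₁ + t • D)) ^ 2 ≤ (2 * σ / 3) ^ 2 :=
          pow_le_pow_left₀ n (by linarith) 2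
        nlinarith)
    have e1 : Y * O * (Oᵀ * R) = Y * R := by
      rw [Matrix.mul_assoc, ← Matrix.mul_assoc O, hO.mulT, Matrix.one_mul]
    have e2 : Y₁ + t • D + (s - t) • D = Y₁ + s • D := by rw [sub_smul]; abel
    rw [e1, e2] at key
    rw [eO, eR]
    linarith
  intro t ht
  have hfin : dOrth (Y₁ + t • D) Y < x := lt_of_pow_lt_pow_left₀ 2 hx.le (hlt t ht)
  refine ⟨?_, hfin⟩
  obtain ⟨O, hO, eO⟩ := dOrth_min (Y₁ + t • D) Y
  exact full_rank (Y * O) _ σ (hσO O hO) (by rw [← eO]; linarith)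
end

section
/- Let Y₁, Y₂ ∈ ℝ^{p×r}_*. Then there exists Q* ∈ O(r) such that: (i) Y₁ᵀY₂Q* is symmetric positive semidefinite; (ii) Y₁ᵀ(Y₂Q* − Y₁) is symmetric (i.e. Y₂Q* − Y₁ is horizontal at Y₁); and (iii) ‖Y₂Q* − Y₁‖_F ≤ ‖Y₂Q − Y₁‖_F for every Q ∈ O(r), so that d(Y₁,Y₂) = ‖Y₂Q* − Y₁‖_F. Moreover, if Y₁ᵀY₂ is nonsingular, then Q* is the unique minimizer of Q ↦ ‖Y₂Q − Y₁‖_F over O(r). -/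
open Matrix

lemma aux_refl {r : ℕ} (P : Matrix (Fin r) (Fin r) ℝ)
    (h : ∀ O : Matrix (Fin r) (Fin r) ℝ, IsOrtho O → (P * O).trace ≤ P.trace)
    (v : Fin r → ℝ) : 0 ≤ v ⬝ᵥ (P *ᵥ v) := by
  by_cases hv : v = 0
  · simp [hv]
  have hpos : 0 < v ⬝ᵥ v := by
    have h0 : 0 ≤ v ⬝ᵥ v := by
      simp only [dotProduct]
      exact Finset.sum_nonneg fun i _ => mul_self_nonneg _
    have h1 : v ⬝ᵥ v ≠ 0 := fun e => hv (dotProduct_self_eq_zero.mp e)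
    exact lt_of_le_of_ne h0 (Ne.symm h1)
  set c := v ⬝ᵥ v with hc
  have hO : IsOrtho (1 - (2 / c) • vecMulVec v v) := by
    unfold IsOrtho
    have hVV : vecMulVec v v * vecMulVec v v = c • vecMulVec v v := by
      rw [vecMulVec_mul_vecMulVec, vecMulVec_smul]
    rw [transpose_sub, transpose_smul, transpose_vecMulVec, transpose_one]
    simp only [sub_mul, mul_sub, one_mul, mul_one, smul_mul_assoc, mul_smul_comm, hVV, smul_smul]
    have : 2 / c * c = 2 := by field_simp
    rw [this]
    module
  have h2 := h _ hO
  rw [mul_sub, mul_one, mul_smul_comm, mul_vecMulVec, trace_sub, trace_smul, trace_vecMulVec,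
    smul_eq_mul, dotProduct_comm] at h2
  have h3 : 0 ≤ 2 / c * (v ⬝ᵥ (P *ᵥ v)) := by linarith
  exact nonneg_of_mul_nonneg_right h3 (by positivity)

lemma aux_symm {r : ℕ} (P : Matrix (Fin r) (Fin r) ℝ)
    (h : ∀ O : Matrix (Fin r) (Fin r) ℝ, IsOrtho O → (P * O).trace ≤ P.trace)
    (i j : Fin r) : P j i = P i j := by
  by_cases hij : i = j
  · rw [hij]
  have hji : j ≠ i := fun e => hij e.symm
  set D : Matrix (Fin r) (Fin r) ℝ := single i i 1 + single j j 1 with hD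
  set K : Matrix (Fin r) (Fin r) ℝ := single i j 1 - single j i 1 with hK
  have hDD : D * D = D := by
    simp [hD, add_mul, mul_add, hij, hji]
  have hDK : D * K = K := by
    simp [hD, hK, add_mul, mul_sub, hij, hji]
    try abel
  have hKD : K * D = K := by
    simp [hD, hK, sub_mul, mul_add, hij, hji]
    try abel
  have hKK : K * K = -D := by
    simp [hD, hK, sub_mul, mul_sub, hij, hji]
    try abel
  have hDt : Dᵀ = D := by simp [hD]
  have hKt : Kᵀ = -K := by simp [hK]
  have key : ∀ a s : ℝ, 2 * a + a ^ 2 + s ^ 2 = 0 →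
      a * (P i i + P j j) + s * (P j i - P i j) ≤ 0 := by
    intro a s has
    have hO : IsOrtho (1 + a • D + s • K) := by
      unfold IsOrtho
      rw [transpose_add, transpose_add, transpose_smul, transpose_smul, hDt, hKt, transpose_one]
      simp only [add_mul, mul_add, one_mul, mul_one, smul_mul_assoc, mul_smul_comm, neg_mul,
        hDD, hDK, hKD, hKK]
      have e : (2 * a + a ^ 2 + s ^ 2) • D = 0 := by rw [has, zero_smul]
      refine Eq.trans ?_ (add_zero (1 : Matrix (Fin r) (Fin r) ℝ))
      rw [← e]
      module
    have h2 := h _ hO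
    simp only [mul_add, mul_one, mul_smul_comm, trace_add, trace_smul, hD, hK, mul_sub, trace_sub,
      trace_mul_single, smul_eq_mul, MulOpposite.op_one, one_smul] at h2
    linarith
  set A := P i i + P j j
  set B := P j i - P i j with hB
  have key2 : ∀ t : ℝ, t * B ≤ t ^ 2 * A := by
    intro t
    have hp : 0 < 1 + t ^ 2 := by positivity
    have := key (-2 * t ^ 2 / (1 + t ^ 2)) (2 * t / (1 + t ^ 2)) (by field_simp; ring)
    have e : -2 * t ^ 2 / (1 + t ^ 2) * A + 2 * t / (1 + t ^ 2) * B
      = (2 / (1 + t ^ 2)) * (t * B - t ^ 2 * A) := by ring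
    rw [e] at this
    have h3 : 0 < 2 / (1 + t ^ 2) := by positivity
    nlinarith
  have hB0 : B = 0 := by
    by_contra hne
    have hBB : 0 < B ^ 2 := by positivity
    have h1 := key2 (B / (|A| + 1))
    have hA : 0 < |A| + 1 := by positivity
    have e1 : B / (|A| + 1) * B = B ^ 2 / (|A| + 1) ^ 2 * (|A| + 1) := by field_simp
    have e2 : (B / (|A| + 1)) ^ 2 * A = B ^ 2 / (|A| + 1) ^ 2 * A := by field_simp
    rw [e1, e2] at h1
    have h4 := le_of_mul_le_mul_left h1 (by positivity)
    have := le_abs_self A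
    linarith
  linarith

lemma aux_psd {r : ℕ} (P : Matrix (Fin r) (Fin r) ℝ)
    (h : ∀ O : Matrix (Fin r) (Fin r) ℝ, IsOrtho O → (P * O).trace ≤ P.trace) :
    P.PosSemidef := by
  refine PosSemidef.of_dotProduct_mulVec_nonneg ?_ ?_
  · ext i j
    simpa using aux_symm P h i j
  · intro v
    simpa using aux_refl P h v

open scoped MatrixOrder in
lemma aux_sq {r : ℕ} {P R : Matrix (Fin r) (Fin r) ℝ} (hP : P.PosSemidef) (hR : R.PosSemidef)
    (h : P * P = R * R) : P = R := by
  have h1 := CFC.sqrt_unique h.symm hR.nonneg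
  have h2 := CFC.sqrt_unique (a := P * P) rfl hP.nonneg
  exact h2.symm.trans h1

lemma aux_sum {p r : ℕ} (A : Matrix (Fin p) (Fin r) ℝ) :
    ∑ i, ∑ j, (A i j) ^ 2 = (Aᵀ * A).trace := by
  rw [Finset.sum_comm]
  simp [trace, mul_apply, pow_two]

lemma aux_expand {p r : ℕ} (Y₁ Y₂ : Matrix (Fin p) (Fin r) ℝ) (Q : Matrix (Fin r) (Fin r) ℝ)
    (hQ : IsOrtho Q) : ((Y₂ * Q - Y₁)ᵀ * (Y₂ * Q - Y₁)).trace =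
      (Y₂ᵀ * Y₂).trace + (Y₁ᵀ * Y₁).trace - 2 * (Y₁ᵀ * Y₂ * Q).trace := by
  have hQ' : Q * Qᵀ = 1 := mul_eq_one_comm.mp hQ
  have e1 : ((Y₂ * Q)ᵀ * (Y₂ * Q)).trace = (Y₂ᵀ * Y₂).trace := by
    rw [transpose_mul, trace_mul_comm, Matrix.mul_assoc, ← Matrix.mul_assoc Q, hQ', Matrix.one_mul,
      trace_mul_comm]
  have e2 : ((Y₂ * Q)ᵀ * Y₁).trace = (Y₁ᵀ * Y₂ * Q).trace := by
    rw [← trace_transpose, transpose_mul, transpose_transpose, Matrix.mul_assoc]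
  rw [transpose_sub, Matrix.sub_mul, Matrix.mul_sub, Matrix.mul_sub, trace_sub, trace_sub,
    trace_sub, e1, e2, ← Matrix.mul_assoc]
  ring

lemma aux_le {p r : ℕ} (Y₁ Y₂ : Matrix (Fin p) (Fin r) ℝ) (Q O : Matrix (Fin r) (Fin r) ℝ)
    (hQ : IsOrtho Q) (hO : IsOrtho O) :
    frob (Y₂ * Q - Y₁) ≤ frob (Y₂ * O - Y₁) ↔
      (Y₁ᵀ * Y₂ * O).trace ≤ (Y₁ᵀ * Y₂ * Q).trace := by
  have h0 : 0 ≤ ((Y₂ * O - Y₁)ᵀ * (Y₂ * O - Y₁)).trace := by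
    rw [← aux_sum]
    exact Finset.sum_nonneg fun i _ => Finset.sum_nonneg fun j _ => sq_nonneg _
  unfold frob
  rw [aux_sum, aux_sum, Real.sqrt_le_sqrt_iff h0, aux_expand _ _ _ hQ, aux_expand _ _ _ hO]
  constructor <;> intro h <;> linarith

lemma aux_max {r : ℕ} (A Q : Matrix (Fin r) (Fin r) ℝ) (hQ : IsOrtho Q)
    (h : ∀ O : Matrix (Fin r) (Fin r) ℝ, IsOrtho O → (A * O).trace ≤ (A * Q).trace) :
    (A * Q).PosSemidef := by
  apply aux_psd
  intro O hO
  rw [Matrix.mul_assoc]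
  apply h
  unfold IsOrtho at *
  rw [transpose_mul, Matrix.mul_assoc, ← Matrix.mul_assoc Qᵀ, hQ, Matrix.one_mul, hO]

lemma aux_compact (r : ℕ) : IsCompact {Q : Matrix (Fin r) (Fin r) ℝ | IsOrtho Q} := by
  have hK : IsCompact (Set.univ.pi fun _ : Fin r => Set.univ.pi fun _ : Fin r =>
      Set.Icc (-1 : ℝ) 1) :=
    isCompact_univ_pi fun _ => isCompact_univ_pi fun _ => isCompact_Icc
  refine IsCompact.of_isClosed_subset (X := Matrix (Fin r) (Fin r) ℝ) hK ?_ ?_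
  · unfold IsOrtho
    exact isClosed_eq (by fun_prop) continuous_const
  · intro Q hQ i _ j _
    have h1 : (Qᵀ * Q) j j = 1 := by
      rw [show Qᵀ * Q = 1 from hQ]; simp
    simp only [mul_apply, transpose_apply] at h1
    have h2 := Finset.single_le_sum (f := fun k => Q k j * Q k j)
      (fun k _ => mul_self_nonneg _) (Finset.mem_univ i)
    simp only [h1] at h2
    exact abs_le.mp (abs_le_one_iff_mul_self_le_one.mpr h2)

/-- optimal orthogonal alignment: existence of a best aligning orthogonal
matrix `Qstar` with `Y₁ᵀ*Y₂*Qstar` PSD and `Y₂*Qstar - Y₁` horizontal at `Y₁`, attaining the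
quotient distance; uniqueness of the minimizer when `Y₁ᵀ*Y₂` is nonsingular. -/
theorem stmt1 {p r : ℕ} (Y₁ Y₂ : Matrix (Fin p) (Fin r) ℝ)
    (hY₁ : Y₁.rank = r) (hY₂ : Y₂.rank = r) :
    ∃ Qstar : Matrix (Fin r) (Fin r) ℝ, IsOrtho Qstar ∧
      (Y₁ᵀ * Y₂ * Qstar).PosSemidef ∧
      (Y₁ᵀ * (Y₂ * Qstar - Y₁)).IsSymm ∧
      (∀ Q : Matrix (Fin r) (Fin r) ℝ, IsOrtho Q →
        frob (Y₂ * Qstar - Y₁) ≤ frob (Y₂ * Q - Y₁)) ∧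
      dOrth Y₁ Y₂ = frob (Y₂ * Qstar - Y₁) ∧
      ((Y₁ᵀ * Y₂).det ≠ 0 →
        ∀ Q : Matrix (Fin r) (Fin r) ℝ, IsOrtho Q →
          (∀ O : Matrix (Fin r) (Fin r) ℝ, IsOrtho O →
            frob (Y₂ * Q - Y₁) ≤ frob (Y₂ * O - Y₁)) → Q = Qstar) := by
  obtain ⟨Qs, hQs, hmax⟩ := (aux_compact r).exists_isMaxOn
    (f := fun Q => (Y₁ᵀ * Y₂ * Q).trace) ⟨1, by simp [IsOrtho]⟩ (by fun_prop)
  have hmax' : ∀ O : Matrix (Fin r) (Fin r) ℝ, IsOrtho O →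
      (Y₁ᵀ * Y₂ * O).trace ≤ (Y₁ᵀ * Y₂ * Qs).trace := fun O hO => hmax hO
  have hQs' : IsOrtho Qs := hQs
  have hpsd := aux_max _ _ hQs' hmax'
  have hmin : ∀ Q : Matrix (Fin r) (Fin r) ℝ, IsOrtho Q →
      frob (Y₂ * Qs - Y₁) ≤ frob (Y₂ * Q - Y₁) := fun Q hQ =>
    (aux_le Y₁ Y₂ Qs Q hQs' hQ).mpr (hmax' Q hQ)
  have hsym : ∀ {B : Matrix (Fin r) (Fin r) ℝ}, B.PosSemidef → Bᵀ = B := by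
    intro B hB
    simpa [conjTranspose_eq_transpose_of_trivial] using hB.isHermitian.eq
  refine ⟨Qs, hQs', hpsd, ?_, hmin, ?_, ?_⟩
  · unfold IsSymm
    rw [Matrix.mul_sub, ← Matrix.mul_assoc, transpose_sub, hsym hpsd, transpose_mul,
      transpose_transpose]
  · unfold dOrth
    refine IsLeast.csInf_eq ⟨⟨Qs, hQs', rfl⟩, ?_⟩
    rintro c ⟨Q, hQ, rfl⟩
    exact hmin Q hQ
  · intro hdet Q hQ hQmin
    have hp2 : (Y₁ᵀ * Y₂ * Q).PosSemidef := aux_max _ _ hQ fun O hO =>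
      (aux_le Y₁ Y₂ Q O hQ hO).mp (hQmin O hO)
    have hsq : ∀ R : Matrix (Fin r) (Fin r) ℝ, IsOrtho R → (Y₁ᵀ * Y₂ * R).PosSemidef →
        (Y₁ᵀ * Y₂ * R) * (Y₁ᵀ * Y₂ * R) = Y₁ᵀ * Y₂ * (Y₁ᵀ * Y₂)ᵀ := by
      intro R hR hp
      have hR' : R * Rᵀ = 1 := mul_eq_one_comm.mp hR
      nth_rewrite 2 [← hsym hp]
      rw [transpose_mul _ R, Matrix.mul_assoc, ← Matrix.mul_assoc R, hR', Matrix.one_mul]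
    have heq := aux_sq hp2 hpsd ((hsq Q hQ hp2).trans (hsq Qs hQs' hpsd).symm)
    have hu : IsUnit (Y₁ᵀ * Y₂) := (isUnit_iff_isUnit_det _).mpr (isUnit_iff_ne_zero.mpr hdet)
    exact hu.mul_left_cancel heq
end

section
/- Let Y, Y' ∈ ℝ^{p×r}_* with d(Y',Y) < σ_r(Y), and let O' ∈ O(r) be a minimizer of O ↦ ‖Y'O − Y‖_F over O ∈ O(r). Then for every t ∈ [0,1], the r×r matrix Yᵀ(Y + t(Y'O' − Y)) is nonsingular and det(Yᵀ(Y + t(Y'O' − Y))) > 0. -/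
open Matrix

lemma frob_sq_trace {m n : ℕ} (A : Matrix (Fin m) (Fin n) ℝ) :
    ∑ i, ∑ j, (A i j) ^ 2 = (A * Aᵀ).trace := by
  simp [Matrix.trace, Matrix.mul_apply, pow_two]

lemma frob_align {p r : ℕ} (Y Y' : Matrix (Fin p) (Fin r) ℝ) (Q : Matrix (Fin r) (Fin r) ℝ)
    (hQ : IsOrtho Q) : frob (Y' * Qᵀ - Y) = frob (Y * Q - Y') := by
  unfold IsOrtho at hQ
  have hQ' : Q * Qᵀ = 1 := mul_eq_one_comm.mp hQ
  have h : Y' * Qᵀ - Y = -((Y * Q - Y') * Qᵀ) := by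
    rw [Matrix.sub_mul, Matrix.mul_assoc, hQ', Matrix.mul_one, neg_sub]
  unfold frob
  rw [frob_sq_trace, frob_sq_trace, h]
  congr 2
  rw [Matrix.transpose_neg, Matrix.neg_mul, Matrix.mul_neg, neg_neg, Matrix.transpose_mul, Matrix.transpose_transpose,
    Matrix.mul_assoc, ← Matrix.mul_assoc Qᵀ, hQ, Matrix.one_mul]

lemma mulVec_le_frob {p r : ℕ} (E : Matrix (Fin p) (Fin r) ℝ) (x : Fin r → ℝ) :
    (E *ᵥ x) ⬝ᵥ (E *ᵥ x) ≤ (frob E) ^ 2 * (x ⬝ᵥ x) := by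
  unfold frob
  rw [Real.sq_sqrt (by positivity), Finset.sum_mul]
  unfold dotProduct
  refine Finset.sum_le_sum fun i _ => ?_
  have := Finset.sum_mul_sq_le_sq_mul_sq Finset.univ (E i) x
  simpa [Matrix.mulVec, dotProduct, pow_two] using this

lemma eigen_le {n : ℕ} (A : Matrix (Fin n) (Fin n) ℝ) (hA : A.IsHermitian) (l : ℝ)
    (hl : ∀ i, l ≤ hA.eigenvalues i) (x : Fin n → ℝ) : l * (x ⬝ᵥ x) ≤ x ⬝ᵥ (A *ᵥ x) := by
  have hU : (hA.eigenvectorUnitary : Matrix (Fin n) (Fin n) ℝ) *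
      (hA.eigenvectorUnitary : Matrix (Fin n) (Fin n) ℝ)ᵀ = 1 := by
    have := Unitary.coe_mul_star_self hA.eigenvectorUnitary
    simpa [Matrix.star_eq_conjTranspose] using this
  have hs : A = (hA.eigenvectorUnitary : Matrix (Fin n) (Fin n) ℝ) *
      Matrix.diagonal hA.eigenvalues *
      (hA.eigenvectorUnitary : Matrix (Fin n) (Fin n) ℝ)ᵀ := by
    have := hA.spectral_theorem
    rw [Unitary.conjStarAlgAut_apply] at this
    simpa [Matrix.star_eq_conjTranspose, Function.comp_def] using this
  generalize hV : (hA.eigenvectorUnitary : Matrix (Fin n) (Fin n) ℝ) = U at hU hs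
  generalize hA.eigenvalues = e at hl hs
  have h1 : x ⬝ᵥ x = (Uᵀ *ᵥ x) ⬝ᵥ (Uᵀ *ᵥ x) := by
    rw [Matrix.dotProduct_mulVec, Matrix.vecMul_transpose, Matrix.mulVec_mulVec, hU,
      Matrix.one_mulVec]
  have h2 : x ⬝ᵥ (A *ᵥ x) = (Uᵀ *ᵥ x) ⬝ᵥ (Matrix.diagonal e *ᵥ (Uᵀ *ᵥ x)) := by
    rw [hs, ← Matrix.mulVec_mulVec, ← Matrix.mulVec_mulVec, Matrix.dotProduct_mulVec,
      Matrix.mulVec_transpose]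
  rw [h1, h2]
  generalize Uᵀ *ᵥ x = y
  simp only [dotProduct, Matrix.mulVec_diagonal, Finset.mul_sum]
  refine Finset.sum_le_sum fun i _ => ?_
  nlinarith [hl i, mul_self_nonneg (y i)]

lemma sval_le {p r : ℕ} (Y : Matrix (Fin p) (Fin r) ℝ) (hs : 0 < sval Y r) (x : Fin r → ℝ) :
    (sval Y r) ^ 2 * (x ⬝ᵥ x) ≤ (Y *ᵥ x) ⬝ᵥ (Y *ᵥ x) := by
  have hsq : (sval Y r) ^ 2 = eigVal (Yᵀ * Y) r := Real.sq_sqrt (Real.sqrt_pos.mp hs).le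
  have h3 : (Y *ᵥ x) ⬝ᵥ (Y *ᵥ x) = x ⬝ᵥ ((Yᵀ * Y) *ᵥ x) := by
    rw [← Matrix.mulVec_mulVec, Matrix.dotProduct_mulVec x, Matrix.vecMul_transpose]
  have hA : (Yᵀ * Y).IsHermitian := by
    simpa using Matrix.isHermitian_conjTranspose_mul_self Y
  rw [hsq, h3]
  rcases Nat.eq_zero_or_pos r with rfl | hr
  · simp [dotProduct]
  apply eigen_le _ hA
  intro i
  unfold eigVal
  rw [dif_pos hA, dif_pos (by omega)]
  have hm := Tuple.monotone_sort hA.eigenvalues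
  have := @hm ⟨r - r, by omega⟩ ((Tuple.sort hA.eigenvalues).symm i) (by
    rw [Fin.le_def]; simp)
  simpa using this

lemma det_ne {p r : ℕ} (Y E : Matrix (Fin p) (Fin r) ℝ) (hE : frob E < sval Y r)
    (t : ℝ) (h0 : 0 ≤ t) (h1 : t ≤ 1) : (Yᵀ * (Y + t • E)).det ≠ 0 := by
  intro hdet
  obtain ⟨x, hx, hMx⟩ := Matrix.exists_mulVec_eq_zero_iff.mpr hdet
  have hf : 0 ≤ frob E := Real.sqrt_nonneg _
  have hxx : 0 < x ⬝ᵥ x := by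
    have h := Matrix.dotProduct_star_self_pos_iff.mpr hx
    simpa using h
  have a := mulVec_le_frob E x
  have b := sval_le Y (hf.trans_lt hE) x
  have c : x ⬝ᵥ ((Yᵀ * (Y + t • E)) *ᵥ x) = 0 := by rw [hMx]; simp
  rw [← Matrix.mulVec_mulVec, Matrix.dotProduct_mulVec, Matrix.vecMul_transpose,
    Matrix.add_mulVec, Matrix.smul_mulVec, dotProduct_add, dotProduct_smul, smul_eq_mul] at c
  have d : (frob E) ^ 2 * (x ⬝ᵥ x) < (sval Y r) ^ 2 * (x ⬝ᵥ x) := by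
    gcongr
  generalize Y *ᵥ x = u at *
  generalize E *ᵥ x = v at *
  have e : 0 ≤ (u + v) ⬝ᵥ (u + v) := by
    have := dotProduct_star_self_nonneg (u + v)
    simpa using this
  rw [dotProduct_add, add_dotProduct, add_dotProduct, dotProduct_comm v u] at e
  have f : 0 ≤ v ⬝ᵥ v := by
    have := dotProduct_star_self_nonneg v
    simpa using this
  nlinarith

theorem stmt2 {p r : ℕ} (Y Y' : Matrix (Fin p) (Fin r) ℝ)
    (hY : Y.rank = r) (hY' : Y'.rank = r)
    (hd : dOrth Y' Y < sval Y r)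
    (O' : Matrix (Fin r) (Fin r) ℝ) (hO' : IsOrtho O')
    (hmin : ∀ O : Matrix (Fin r) (Fin r) ℝ, IsOrtho O →
      frob (Y' * O' - Y) ≤ frob (Y' * O - Y)) :
    ∀ t : ℝ, t ∈ Set.Icc (0 : ℝ) 1 →
      (Yᵀ * (Y + t • (Y' * O' - Y))).det ≠ 0 ∧
      0 < (Yᵀ * (Y + t • (Y' * O' - Y))).det := by
  have hE : frob (Y' * O' - Y) < sval Y r := by
    obtain ⟨c, ⟨Q, hQ, rfl⟩, hc⟩ := exists_lt_of_csInf_lt (s := {c | ∃ Q : Matrix (Fin r) (Fin r) ℝ, IsOrtho Q ∧ c = frob (Y * Q - Y')})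
      ⟨_, 1, by simp [IsOrtho], rfl⟩ hd
    have hQ' : IsOrtho Qᵀ := by
      unfold IsOrtho at *
      rw [Matrix.transpose_transpose]
      exact mul_eq_one_comm.mp hQ
    exact ((hmin _ hQ').trans_eq (frob_align Y Y' Q hQ)).trans_lt hc
  intro t ht
  have hne := fun s (hs : s ∈ Set.Icc (0 : ℝ) 1) => det_ne Y (Y' * O' - Y) hE s hs.1 hs.2
  generalize Y' * O' - Y = E at *
  refine ⟨hne t ht, ?_⟩
  by_contra hneg
  have hp : 0 ≤ (Yᵀ * (Y + (0 : ℝ) • E)).det := by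
    have := (Matrix.posSemidef_conjTranspose_mul_self Y).det_nonneg
    simpa using this
  have hcont : Continuous fun s : ℝ => (Yᵀ * (Y + s • E)).det := by fun_prop
  obtain ⟨s, hs, hs0⟩ := intermediate_value_Icc' ht.1 hcont.continuousOn
    (show (0 : ℝ) ∈ Set.Icc _ _ from ⟨not_lt.mp hneg, hp⟩)
  exact hne s ⟨hs.1, hs.2.trans ht.2⟩ hs0
end

section
/- Let A : ℝ → ℝ^{p₁×p₂}, σ : ℝ → ℝ, u : ℝ → ℝ^{p₁} and v : ℝ → ℝ^{p₂} be twice differentiable functions such that for all t: ‖u(t)‖₂ = ‖v(t)‖₂ = 1, A(t)v(t) = σ(t)u(t) and A(t)ᵀu(t) = σ(t)v(t) (so σ(t) is a singular value of A(t) with left singular vector u(t) and right singular vector v(t)). Then for every t: σ'(t) = ⟨u(t), A'(t)v(t)⟩ and σ''(t) = ⟨u(t), A''(t)v(t)⟩ + ⟨A'(t), (d/dt)(u(t)v(t)ᵀ)⟩, where the inner product of vectors is the Euclidean one and the inner product of matrices is ⟨A,B⟩ = tr(AᵀB). -/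
open Matrix

/-- variation formulas for singular values: first and second derivative
formulas for a smoothly varying singular value/singular vector triple of a one-parameter
family of matrices. -/
theorem stmt5 {p₁ p₂ : ℕ}
    (A A' A'' : ℝ → Matrix (Fin p₁) (Fin p₂) ℝ)
    (σ σ' σ'' : ℝ → ℝ)
    (u u' : ℝ → Fin p₁ → ℝ) (v v' : ℝ → Fin p₂ → ℝ)
    (hA : ∀ t i j, HasDerivAt (fun s : ℝ => A s i j) (A' t i j) t)
    (hA' : ∀ t i j, HasDerivAt (fun s : ℝ => A' s i j) (A'' t i j) t)
    (hσ : ∀ t, HasDerivAt σ (σ' t) t)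
    (hσ' : ∀ t, HasDerivAt σ' (σ'' t) t)
    (hu : ∀ t i, HasDerivAt (fun s : ℝ => u s i) (u' t i) t)
    (hv : ∀ t i, HasDerivAt (fun s : ℝ => v s i) (v' t i) t)
    (hunorm : ∀ t, ∑ i, (u t i) ^ 2 = 1)
    (hvnorm : ∀ t, ∑ i, (v t i) ^ 2 = 1)
    (hsv₁ : ∀ t, A t *ᵥ v t = σ t • u t)
    (hsv₂ : ∀ t, (A t)ᵀ *ᵥ u t = σ t • v t) :
    ∀ t : ℝ,
      σ' t = ∑ i, u t i * (A' t *ᵥ v t) i ∧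
      σ'' t = (∑ i, u t i * (A'' t *ᵥ v t) i) +
        ∑ i, ∑ j, A' t i j * (u' t i * v t j + u t i * v' t j) := by
  have hu0 : ∀ t, ∑ i, u' t i * u t i = 0 := by
    intro t
    have h1 : HasDerivAt (fun s => ∑ i, (u s i) ^ 2) (∑ i, 2 * (u' t i * u t i)) t := by
      refine HasDerivAt.fun_sum fun i _ => ?_
      refine ((hu t i).fun_pow 2).congr_deriv ?_
      push_cast
      ring
    have h2 : HasDerivAt (fun s => ∑ i, (u s i) ^ 2) 0 t := by
      simp only [hunorm]
      exact hasDerivAt_const t 1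
    have h3 := h1.unique h2
    rw [← Finset.mul_sum] at h3
    linarith
  have hv0 : ∀ t, ∑ i, v' t i * v t i = 0 := by
    intro t
    have h1 : HasDerivAt (fun s => ∑ i, (v s i) ^ 2) (∑ i, 2 * (v' t i * v t i)) t := by
      refine HasDerivAt.fun_sum fun i _ => ?_
      refine ((hv t i).fun_pow 2).congr_deriv ?_
      push_cast
      ring
    have h2 : HasDerivAt (fun s => ∑ i, (v s i) ^ 2) 0 t := by
      simp only [hvnorm]
      exact hasDerivAt_const t 1
    have h3 := h1.unique h2
    rw [← Finset.mul_sum] at h3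
    linarith
  -- derivative of the bilinear form
  have key : ∀ (B B' : ℝ → Matrix (Fin p₁) (Fin p₂) ℝ),
      (∀ t i j, HasDerivAt (fun s : ℝ => B s i j) (B' t i j) t) → ∀ t,
      HasDerivAt (fun s => ∑ i, u s i * (B s *ᵥ v s) i)
        ((∑ i, u t i * (B' t *ᵥ v t) i) +
          ∑ i, ∑ j, B t i j * (u' t i * v t j + u t i * v' t j)) t := by
    intro B B' hB t
    simp only [Matrix.mulVec, dotProduct, Finset.mul_sum, ← Finset.sum_add_distrib]
    refine HasDerivAt.fun_sum fun i _ => HasDerivAt.fun_sum fun j _ => ?_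
    refine ((hu t i).fun_mul ((hB t i j).fun_mul (hv t j))).congr_deriv ?_
    ring
  have hσeq : ∀ t, σ t = ∑ i, u t i * (A t *ᵥ v t) i := by
    intro t
    have : ∀ i, u t i * (A t *ᵥ v t) i = σ t * (u t i) ^ 2 := by
      intro i
      rw [hsv₁]
      simp only [Pi.smul_apply, smul_eq_mul]
      ring
    simp only [this, ← Finset.mul_sum, hunorm, mul_one]
  have first : ∀ t, σ' t = ∑ i, u t i * (A' t *ᵥ v t) i := by
    intro t
    have h1 := key A A' hA t
    rw [← funext hσeq] at h1
    rw [(hσ t).unique h1]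
    have e1 : ∑ i, ∑ j, A t i j * (u' t i * v t j) = 0 := by
      have : ∀ i, ∑ j, A t i j * (u' t i * v t j) = σ t * (u' t i * u t i) := by
        intro i
        have h := congrFun (hsv₁ t) i
        simp only [Matrix.mulVec, dotProduct, Pi.smul_apply, smul_eq_mul] at h
        calc _ = u' t i * ∑ j, A t i j * v t j := by
              rw [Finset.mul_sum]
              exact Finset.sum_congr rfl fun j _ => by ring
          _ = _ := by rw [h]; ring
      simp only [this, ← Finset.mul_sum, hu0, mul_zero]
    have e2 : ∑ i, ∑ j, A t i j * (u t i * v' t j) = 0 := by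
      rw [Finset.sum_comm]
      have : ∀ j, ∑ i, A t i j * (u t i * v' t j) = σ t * (v' t j * v t j) := by
        intro j
        have h := congrFun (hsv₂ t) j
        simp only [Matrix.mulVec, dotProduct, Matrix.transpose_apply, Pi.smul_apply,
          smul_eq_mul] at h
        calc _ = v' t j * ∑ i, A t i j * u t i := by
              rw [Finset.mul_sum]
              exact Finset.sum_congr rfl fun i _ => by ring
          _ = _ := by rw [h]; ring
      simp only [this, ← Finset.mul_sum, hv0, mul_zero]
    simp only [mul_add, Finset.sum_add_distrib, e1, e2, add_zero]
  intro t
  refine ⟨first t, ?_⟩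
  have h1 := key A' A'' hA' t
  rw [← funext first] at h1
  exact (hσ' t).unique h1
end

section
/- Let Y*, Y ∈ ℝ^{p×r}_* and X* := Y*Y*ᵀ. If (YYᵀ − X*)Y = 0, then YYᵀ = X*; equivalently, Y = Y*Q for some Q ∈ O(r). Hence [Y*] is the unique Riemannian first-order stationary point of H([Y]) = (1/2)‖YYᵀ − X*‖²_F on the quotient manifold, whose lifted Riemannian gradient is grad_H(Y) = 2(YYᵀ − X*)Y. -/
open Matrix

theorem gram_det_isUnit {p r : ℕ} (Y : Matrix (Fin p) (Fin r) ℝ) (hY : Y.rank = r) :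
    IsUnit (Yᵀ * Y).det := by
  have h : (Yᵀ * Y).rank = r := by rw [Matrix.rank_transpose_mul_self, hY]
  rw [← Matrix.isUnit_iff_isUnit_det, ← Matrix.mulVec_surjective_iff_isUnit]
  have h2 : LinearMap.range (Yᵀ * Y).mulVecLin = ⊤ := by
    apply Submodule.eq_top_of_finrank_eq
    rw [← Matrix.rank, h]
    simp
  exact LinearMap.range_eq_top.mp h2

/-- the target class is the unique Riemannian first-order stationary point of
the matrix factorization objective `H`. -/
theorem stmt7 {p r : ℕ} (Ystar Y : Matrix (Fin p) (Fin r) ℝ)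
    (hYs : Ystar.rank = r) (hY : Y.rank = r)
    (hFOSP : (Y * Yᵀ - Ystar * Ystarᵀ) * Y = 0) :
    Y * Yᵀ = Ystar * Ystarᵀ ∧
    ∃ Q : Matrix (Fin r) (Fin r) ℝ, IsOrtho Q ∧ Y = Ystar * Q := by
  have hG := gram_det_isUnit Y hY
  have hK := gram_det_isUnit Ystar hYs
  have h1 : Y * (Yᵀ * Y) = Ystar * (Ystarᵀ * Y) := by
    rw [Matrix.sub_mul, sub_eq_zero] at hFOSP
    simpa only [Matrix.mul_assoc] using hFOSP
  obtain ⟨Q, hQ⟩ : ∃ Q : Matrix (Fin r) (Fin r) ℝ, Y = Ystar * Q := by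
    refine ⟨Ystarᵀ * Y * (Yᵀ * Y)⁻¹, ?_⟩
    rw [← Matrix.mul_assoc, ← h1, Matrix.mul_nonsing_inv_cancel_right _ _ hG]
  subst hQ
  set K := Ystarᵀ * Ystar with hKdef
  have hGe : (Ystar * Q)ᵀ * (Ystar * Q) = Qᵀ * (K * Q) := by
    simp only [hKdef, Matrix.transpose_mul, Matrix.mul_assoc]
  have hQu : IsUnit Q.det := by
    rw [hGe, Matrix.det_mul, Matrix.det_mul] at hG
    exact isUnit_of_mul_isUnit_right (isUnit_of_mul_isUnit_right hG)
  have h2 : K * (Q * Qᵀ * K * Q) = K * (K * Q) := by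
    rw [hGe] at h1
    have := congrArg (fun M => Ystarᵀ * M) h1
    simpa only [hKdef, Matrix.mul_assoc] using this
  have cancelL : ∀ A B : Matrix (Fin r) (Fin r) ℝ, K * A = K * B → A = B := fun A B h => by
    rw [← Matrix.nonsing_inv_mul_cancel_left K A hK, h, Matrix.nonsing_inv_mul_cancel_left K B hK]
  have h3 := cancelL _ _ h2
  have h4 : Q * Qᵀ * K = K := by
    rw [← Matrix.mul_nonsing_inv_cancel_right Q (Q * Qᵀ * K) hQu, h3,
      Matrix.mul_nonsing_inv_cancel_right Q K hQu]
  have h5 : Q * Qᵀ = 1 := by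
    rw [← Matrix.mul_nonsing_inv_cancel_right K (Q * Qᵀ) hK, h4, Matrix.mul_nonsing_inv K hK]
  refine ⟨?_, Q, mul_eq_one_comm.mp h5, rfl⟩
  rw [Matrix.transpose_mul, Matrix.mul_assoc, ← Matrix.mul_assoc Q, h5, Matrix.one_mul]
end
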